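/- Let (i,j) ∈ E be an edge of a finite connected simple graph G, with lazy parameters α_u = 1/(ρ_u+1) for u ∈ {i,j}, α_min = min{α_i,α_j}, α_max = max{α_i,α_j}, Δ_ij(α) = α_max − α_min, and α_⋆ = α_min if c_OR-0(i,j) ≥ 0 and α_⋆ = α_max otherwise. Then c_OR(i,j) ≥ (1−α_⋆)·(−[𝔎(i,j) − Z_max(i,j) − 𝒮(i,j)]₊ − [𝔎(i,j) − Z_min(i,j) − 𝒮(i,j)]₊ + Z_max(i,j)) − Δ_ij(α), where [x]₊ = max{0,x}. -/

import Mathlib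

namespace Curv

open Finset

noncomputable section

variable {V : Type*} [Fintype V] [DecidableEq V] (G : SimpleGraph V) [DecidableRel G.Adj]

/-- `μ` is a probability distribution on the (finite) vertex set. -/
def IsProb (μ : V → ℝ) : Prop := (∀ x, 0 ≤ μ x) ∧ ∑ x, μ x = 1

/-- `π` is a coupling of `μ` and `ν`. -/
def IsCoupling (μ ν : V → ℝ) (π : V → V → ℝ) : Prop :=
  (∀ x y, 0 ≤ π x y) ∧ (∀ x, ∑ y, π x y = μ x) ∧ (∀ y, ∑ x, π x y = ν y)

/-- Transport cost of a plan `π` with respect to the shortest-path graph distance. -/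
def cost (π : V → V → ℝ) : ℝ := ∑ x, ∑ y, (G.dist x y : ℝ) * π x y

/-- Wasserstein-1 distance between two distributions on the vertex set. -/
def W1 (μ ν : V → ℝ) : ℝ := sInf {c : ℝ | ∃ π, IsCoupling μ ν π ∧ cost G π = c}

/-- Dirac mass at `u`. -/
def dirac (u : V) : V → ℝ := fun x => if x = u then 1 else 0

/-- Uniform distribution on the neighbours of `u`. -/
def unif (u : V) : V → ℝ := fun x => if G.Adj u x then ((G.degree u : ℝ))⁻¹ else 0

/-- Lazy random-walk measure with laziness parameter `α`. -/
def mGen (α : ℝ) (u : V) : V → ℝ := fun x => α * dirac u x + (1 - α) * unif G u x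

/-- Canonical laziness `1/(deg u + 1)`. -/
def alphaL (u : V) : ℝ := ((G.degree u : ℝ) + 1)⁻¹

/-- The lazy random-walk measure `m_u`. -/
def mLazy (u : V) : V → ℝ := mGen G (alphaL G u) u

/-- Ollivier–Ricci curvature (lazy). -/
def cOR (i j : V) : ℝ := 1 - W1 G (mLazy G i) (mLazy G j)

/-- Non-lazy Ollivier–Ricci curvature. -/
def cOR0 (i j : V) : ℝ := 1 - W1 G (unif G i) (unif G j)

/-- Positive part `[x]₊`. -/
def pos (x : ℝ) : ℝ := max x 0

/-- Triangle count `△(u,v)`. -/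
def tri (u v : V) : ℕ := (G.neighborFinset u ∩ G.neighborFinset v).card

/-- Unique neighbours `N(u) \ (N(v) ∪ {v})`. -/
def uniq (u v : V) : Finset V := G.neighborFinset u \ insert v (G.neighborFinset v)

/-- `ξ_u(u,v)`: unique neighbours of `u` having a neighbour among unique neighbours of `v`. -/
def xiSet (u v : V) : Finset V := (uniq G u v).filter fun k => ∃ w ∈ uniq G v u, G.Adj k w

/-- `Ξ_uv`. -/
def Xi (u v : V) : ℕ := (xiSet G u v).card + (xiSet G v u).card

/-- `□̃(k,u,v) = |N(k) ∩ (N(v)\(N(u)∪{u}))|`. -/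
def boxT (k u v : V) : ℕ := (G.neighborFinset k ∩ uniq G v u).card

/-- `ϖ_max(u,v)`. -/
def varpi (u v : V) : ℕ :=
  max (((G.neighborFinset u).erase v).sup fun k => boxT G k u v)
      (((G.neighborFinset v).erase u).sup fun w => boxT G w v u)

/-- `þ_max(u,v) = ϖ_max(u,v)·max{ρ_u,ρ_v}`. -/
def thMax (u v : V) : ℕ := varpi G u v * max (G.degree u) (G.degree v)

/-- Edgewise 4-cycle coefficient `C₄(u,v)`. -/
def C4 (u v : V) : ℝ := if 0 < Xi G u v then (Xi G u v : ℝ) / (thMax G u v : ℝ) else 0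

/-- Graph-wide 4-cycle constant `C₄(G)`. -/
def C4Graph : ℝ := sSup {x : ℝ | ∃ u v, G.Adj u v ∧ x = C4 G u v}

def rhoMin (i j : V) : ℕ := min (G.degree i) (G.degree j)

def rhoMax (i j : V) : ℕ := max (G.degree i) (G.degree j)

/-- `𝔖(i,j)`. -/
def frakS (i j : V) : ℝ := 2 / (G.degree i : ℝ) + 2 / (G.degree j : ℝ) - 2

/-- `𝔗(i,j)`. -/
def frakT (i j : V) : ℝ := 2 / (rhoMax G i j : ℝ) + 1 / (rhoMin G i j : ℝ)

/-- `𝔎(i,j)`. -/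
def frakK (i j : V) : ℝ := 1 - 1 / (rhoMin G i j : ℝ) - 1 / (rhoMax G i j : ℝ)

/-- `Z_min(i,j)`. -/
def Zmin (i j : V) : ℝ := (tri G i j : ℝ) / (rhoMin G i j : ℝ)

/-- `Z_max(i,j)`. -/
def Zmax (i j : V) : ℝ := (tri G i j : ℝ) / (rhoMax G i j : ℝ)

/-- Balanced Forman curvature. -/
def cBF (i j : V) : ℝ :=
  if rhoMin G i j = 1 then 0
  else frakS G i j + frakT G i j * (tri G i j : ℝ) + C4 G i j

/-- `M` is a matching in the cross-edge bipartite graph `B_ij`. -/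
def IsCrossMatching (i j : V) (M : Finset (V × V)) : Prop :=
  (∀ p ∈ M, p.1 ∈ uniq G i j ∧ p.2 ∈ uniq G j i ∧ G.Adj p.1 p.2) ∧
  (∀ p ∈ M, ∀ q ∈ M, p ≠ q → p.1 ≠ q.1 ∧ p.2 ≠ q.2)

/-- Maximum matching size `𝔪(i,j)` in the cross-edge bipartite graph. -/
def matchNum (i j : V) : ℕ :=
  sSup {n : ℕ | ∃ M : Finset (V × V), IsCrossMatching G i j M ∧ M.card = n}

/-- `𝒮(i,j) = 𝔪(i,j)/ρ_max`. -/
def SS (i j : V) : ℝ := (matchNum G i j : ℝ) / (rhoMax G i j : ℝ)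

/-- Lazy per-neighbour weight `w_u = (1-α)/ρ_u`. -/
def wA (α : ℝ) (u : V) : ℝ := (1 - α) / (G.degree u : ℝ)

/-- Lazy conductance sum `Σ`. -/
def SigmaA (αi αj : ℝ) (i j : V) : ℝ :=
  (G.degree i : ℝ) / (1 - αi) + (G.degree j : ℝ) / (1 - αj)

/-- `Const_α`. -/
def ConstA (αi αj : ℝ) (i j : V) : ℝ :=
  -1 + 2 * (min αi ((1 - αj) / (G.degree j : ℝ)) + min αj ((1 - αi) / (G.degree i : ℝ)))
    + (pos (αi - (1 - αj) / (G.degree j : ℝ)) + pos ((1 - αj) / (G.degree j : ℝ) - αi)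
      + pos (αj - (1 - αi) / (G.degree i : ℝ)) + pos ((1 - αi) / (G.degree i : ℝ) - αj))
    + ((G.degree i : ℝ) + (G.degree j : ℝ) - 2) / SigmaA G αi αj i j

/-- `Slope_α`. -/
def SlopeA (αi αj : ℝ) (i j : V) : ℝ := wA G αi i + wA G αj j - 2 / SigmaA G αi αj i j

/-- `α_⋆`: `α_min` when the non-lazy curvature is nonnegative, `α_max` otherwise. -/
def alphaStar (i j : V) : ℝ :=
  if 0 ≤ cOR0 G i j then min (alphaL G i) (alphaL G j) else max (alphaL G i) (alphaL G j)

/-- `Δ_ij(α) = α_max − α_min` for the canonical laziness. -/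
def DeltaL (i j : V) : ℝ := max (alphaL G i) (alphaL G j) - min (alphaL G i) (alphaL G j)

lemma W1_le_cost {μ ν : V → ℝ} {π : V → V → ℝ} (h : IsCoupling μ ν π) : W1 G μ ν ≤ cost G π := by
  apply csInf_le
  · refine ⟨0, ?_⟩
    rintro c ⟨p, hp, rfl⟩
    exact sum_nonneg fun x _ => sum_nonneg fun y _ => mul_nonneg (Nat.cast_nonneg _) (hp.1 x y)
  · exact ⟨π, h, rfl⟩

lemma W1_symm (μ ν : V → ℝ) : W1 G μ ν = W1 G ν μ := by
  have key : ∀ μ ν : V → ℝ, {c : ℝ | ∃ π, IsCoupling μ ν π ∧ cost G π = c} ⊆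
      {c : ℝ | ∃ π, IsCoupling ν μ π ∧ cost G π = c} := by
    rintro μ ν c ⟨p, hp, rfl⟩
    refine ⟨fun x y => p y x, ⟨fun x y => hp.1 y x, hp.2.2, hp.2.1⟩, ?_⟩
    unfold cost
    rw [sum_comm]
    simp only [SimpleGraph.dist_comm]
  unfold W1
  rw [Set.Subset.antisymm (key μ ν) (key ν μ)]

lemma W1_le_partial {μ ν : V → ℝ} {κ : V → V → ℝ} (f : V → ℝ)
    (hκ : ∀ x y, 0 ≤ κ x y) (hp : ∀ x, ∑ y, κ x y ≤ μ x) (hq : ∀ y, ∑ x, κ x y ≤ ν y)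
    (hμ : ∑ x, μ x = 1) (hν : ∑ x, ν x = 1)
    (hf : ∀ x y, 0 < μ x → ν y - ∑ z, κ z y ≠ 0 → (G.dist x y : ℝ) ≤ f x) :
    W1 G μ ν ≤ (∑ x, ∑ y, (G.dist x y : ℝ) * κ x y) + ∑ x, (μ x - ∑ y, κ x y) * f x := by
  obtain ⟨r, hr⟩ : ∃ r : V → ℝ, r = fun x => μ x - ∑ y, κ x y := ⟨_, rfl⟩
  obtain ⟨s, hs⟩ : ∃ s : V → ℝ, s = fun y => ν y - ∑ x, κ x y := ⟨_, rfl⟩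
  have hr0 : ∀ x, 0 ≤ r x := fun x => by rw [hr]; exact sub_nonneg.2 (hp x)
  have hs0 : ∀ x, 0 ≤ s x := fun x => by rw [hs]; exact sub_nonneg.2 (hq x)
  obtain ⟨R, hR⟩ : ∃ R : ℝ, R = ∑ x, r x := ⟨_, rfl⟩
  have hRs : ∑ x, s x = R := by
    rw [hR, hr, hs]
    simp only [sum_sub_distrib, hμ, hν]
    rw [sum_comm]
  have hrR : ∀ x, r x * (∑ y, s y) / R = r x := by
    intro x
    rw [hRs]
    by_cases h : R = 0
    · have : r x = 0 := (sum_eq_zero_iff_of_nonneg (fun x _ => hr0 x)).1 (hR ▸ h) x (mem_univ x)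
      simp [this]
    · field_simp
  have hsR : ∀ x, s x * (∑ y, r y) / R = s x := by
    intro x
    rw [← hR]
    by_cases h : R = 0
    · have : s x = 0 := (sum_eq_zero_iff_of_nonneg (fun x _ => hs0 x)).1 (hRs.trans h) x (mem_univ x)
      simp [this]
    · field_simp
  have hR0 : 0 ≤ R := hR ▸ sum_nonneg fun x _ => hr0 x
  have hrow : ∀ x, ∑ y, r x * s y / R = r x := by
    intro x
    rw [← sum_div, ← mul_sum, hrR]
  have hcol : ∀ y, ∑ x, r x * s y / R = s y := by
    intro y
    rw [← sum_div, ← sum_mul, mul_comm, hsR]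
  have hc : IsCoupling μ ν (fun x y => κ x y + r x * s y / R) := by
    refine ⟨fun x y => add_nonneg (hκ x y) (div_nonneg (mul_nonneg (hr0 x) (hs0 y)) hR0), ?_, ?_⟩
    · intro x
      rw [sum_add_distrib, hrow, hr]; ring
    · intro y
      rw [sum_add_distrib, hcol, hs]; ring
  refine (W1_le_cost G hc).trans ?_
  unfold cost
  simp only [mul_add, sum_add_distrib]
  refine add_le_add le_rfl (sum_le_sum fun x _ => ?_)
  have : (μ x - ∑ y, κ x y) * f x = ∑ y, f x * (r x * s y / R) := by
    rw [← mul_sum, hrow, hr]; ring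
  rw [this]
  refine sum_le_sum fun y _ => ?_
  by_cases h1 : r x = 0
  · simp [h1]
  by_cases h2 : s y = 0
  · simp [h2]
  refine mul_le_mul_of_nonneg_right (hf x y ?_ ?_)
    (div_nonneg (mul_nonneg (hr0 x) (hs0 y)) hR0)
  · have h3 : 0 < r x := lt_of_le_of_ne (hr0 x) (Ne.symm h1)
    have h4 : 0 ≤ ∑ y, κ x y := sum_nonneg fun y _ => hκ x y
    rw [hr] at h3
    simp only at h3
    linarith
  · rw [hs] at h2
    exact h2

lemma mLazy_eq {u : V} (hd : 0 < G.degree u) (x : V) :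
    mLazy G u x = if x ∈ insert u (G.neighborFinset u) then ((G.degree u : ℝ) + 1)⁻¹ else 0 := by
  have hd' : (0 : ℝ) < G.degree u := by exact_mod_cast hd
  unfold mLazy mGen dirac unif alphaL
  simp only [mem_insert, SimpleGraph.mem_neighborFinset]
  by_cases h1 : x = u
  · subst h1; simp
  · by_cases h2 : G.Adj u x
    · simp [h1, h2]; field_simp; ring
    · simp [h1, h2]

lemma card_ball (u : V) : (insert u (G.neighborFinset u)).card = G.degree u + 1 := by
  rw [card_insert_of_notMem (by simp), SimpleGraph.card_neighborFinset_eq_degree]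

lemma sum_mLazy {u : V} (hd : 0 < G.degree u) (f : V → ℝ) :
    ∑ x, mLazy G u x * f x
      = ((G.degree u : ℝ) + 1)⁻¹ * ∑ x ∈ insert u (G.neighborFinset u), f x := by
  simp only [mLazy_eq G hd, ite_mul, zero_mul]
  rw [sum_ite_mem, univ_inter, mul_sum]

lemma sum_mLazy_one {u : V} (hd : 0 < G.degree u) : ∑ x, mLazy G u x = 1 := by
  have h := sum_mLazy G hd (fun _ => 1)
  simp only [mul_one, sum_const, card_ball, nsmul_eq_mul] at h
  rw [h]
  push_cast
  field_simp

/-- The common part of the two closed balls. -/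
def comm (i j : V) : Finset V :=
  insert i (insert j (G.neighborFinset i ∩ G.neighborFinset j))

lemma card_comm {i j : V} (hij : G.Adj i j) : (comm G i j).card = tri G i j + 2 := by
  unfold comm tri
  rw [card_insert_of_notMem, card_insert_of_notMem]
  · simp
  · simp [hij.ne]

lemma key (hG : G.Connected) {i j : V} (hij : G.Adj i j) (hle : G.degree i ≤ G.degree j)
    {M : Finset (V × V)} (hM : IsCrossMatching G i j M) :
    W1 G (mLazy G i) (mLazy G j) ≤
      3 - ((tri G i j : ℝ) + 3) / (G.degree i + 1)
        - (2 * (M.card : ℝ) + 2 * tri G i j + 3) / (G.degree j + 1) := by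
  have hdi : 0 < G.degree i := (G.degree_pos_iff_exists_adj i).2 ⟨j, hij⟩
  have hdj : 0 < G.degree j := (G.degree_pos_iff_exists_adj j).2 ⟨i, hij.symm⟩
  obtain ⟨b, hb⟩ : ∃ b : ℝ, b = ((G.degree j : ℝ) + 1)⁻¹ := ⟨_, rfl⟩
  have hb0 : 0 < b := by rw [hb]; positivity
  have hba : b ≤ ((G.degree i : ℝ) + 1)⁻¹ := by
    rw [hb]
    apply inv_anti₀ (by positivity)
    have : (G.degree i : ℝ) ≤ G.degree j := by exact_mod_cast hle
    linarith
  obtain ⟨C, hC⟩ : ∃ C, C = comm G i j := ⟨_, rfl⟩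
  have hCmem : ∀ x, x ∈ C ↔ x = i ∨ x = j ∨ (G.Adj i x ∧ G.Adj j x) := by
    intro x; rw [hC]; simp [comm]
  have huij : ∀ x, x ∈ uniq G i j ↔ G.Adj i x ∧ x ≠ j ∧ ¬ G.Adj j x := by
    intro x; simp [uniq]
  have huji : ∀ x, x ∈ uniq G j i ↔ G.Adj j x ∧ x ≠ i ∧ ¬ G.Adj i x := by
    intro x; simp [uniq]
  obtain ⟨P, hP⟩ : ∃ P : Finset (V × V), P = C.image (fun x => (x, x)) ∪ M := ⟨_, rfl⟩
  have hPmem : ∀ x y, (x, y) ∈ P ↔ (x = y ∧ x ∈ C) ∨ (x, y) ∈ M := by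
    intro x y
    rw [hP]
    simp only [mem_union, mem_image, Prod.mk.injEq]
    constructor
    · rintro (⟨z, hz, rfl, rfl⟩ | h)
      · exact Or.inl ⟨rfl, hz⟩
      · exact Or.inr h
    · rintro (⟨rfl, h⟩ | h)
      · exact Or.inl ⟨x, h, rfl, rfl⟩
      · exact Or.inr h
  have hMC1 : ∀ x y, (x, y) ∈ M → x ∉ C := by
    intro x y h hc
    have h1 := (huij x).1 (hM.1 _ h).1
    rcases (hCmem x).1 hc with rfl | rfl | h2
    · exact h1.1.ne rfl
    · exact h1.2.1 rfl
    · exact h1.2.2 h2.2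
  have hMC2 : ∀ x y, (x, y) ∈ M → y ∉ C := by
    intro x y h hc
    have h1 := (huji y).1 (hM.1 _ h).2.1
    rcases (hCmem y).1 hc with rfl | rfl | h2
    · exact h1.2.1 rfl
    · exact h1.1.ne rfl
    · exact h1.2.2 h2.1
  have hinj1 : ∀ x y z, (x, y) ∈ P → (x, z) ∈ P → y = z := by
    intro x y z h1 h2
    rcases (hPmem _ _).1 h1 with ⟨rfl, k1⟩ | k1
    · rcases (hPmem _ _).1 h2 with ⟨rfl, k2⟩ | k2
      · rfl
      · exact absurd k1 (hMC1 _ _ k2)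
    · rcases (hPmem _ _).1 h2 with ⟨rfl, k2⟩ | k2
      · exact absurd k2 (hMC1 _ _ k1)
      · by_contra hne
        exact (hM.2 _ k1 _ k2 (fun h => hne (Prod.mk.inj h).2)).1 rfl
  have hinj2 : ∀ x y z, (x, z) ∈ P → (y, z) ∈ P → x = y := by
    intro x y z h1 h2
    rcases (hPmem _ _).1 h1 with ⟨rfl, k1⟩ | k1
    · rcases (hPmem _ _).1 h2 with ⟨rfl, k2⟩ | k2
      · rfl
      · exact absurd k1 (hMC2 _ _ k2)
    · rcases (hPmem _ _).1 h2 with ⟨rfl, k2⟩ | k2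
      · exact absurd k2 (hMC2 _ _ k1)
      · by_contra hne
        exact (hM.2 _ k1 _ k2 (fun h => hne (Prod.mk.inj h).1)).2 rfl
  obtain ⟨κ, hκ⟩ : ∃ κ : V → V → ℝ, κ = fun x y => if (x, y) ∈ P then b else 0 := ⟨_, rfl⟩
  have hκ0 : ∀ x y, 0 ≤ κ x y := by
    intro x y; rw [hκ]; simp only; split_ifs
    · exact hb0.le
    · exact le_rfl
  have hrow1 : ∀ x y, (x, y) ∈ P → ∑ z, κ x z = b := by
    intro x y h
    rw [sum_eq_single y, hκ]
    · simp [h]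
    · intro z _ hz
      rw [hκ]
      simp only
      rw [if_neg]
      exact fun h' => hz (hinj1 _ _ _ h' h)
    · simp
  have hcol1 : ∀ x y, (x, y) ∈ P → ∑ z, κ z y = b := by
    intro x y h
    rw [sum_eq_single x, hκ]
    · simp [h]
    · intro z _ hz
      rw [hκ]
      simp only
      rw [if_neg]
      exact fun h' => hz (hinj2 _ _ _ h' h)
    · simp
  have hmnn : ∀ u, 0 < G.degree u → ∀ x, 0 ≤ mLazy G u x := by
    intro u hu x
    rw [mLazy_eq G hu]
    split_ifs
    · positivity
    · exact le_rfl
  have hrow : ∀ x, ∑ y, κ x y ≤ mLazy G i x := by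
    intro x
    by_cases h : ∃ y, (x, y) ∈ P
    · obtain ⟨y, hy⟩ := h
      rw [hrow1 _ _ hy, mLazy_eq G hdi, if_pos]
      · exact hba
      · rw [mem_insert, SimpleGraph.mem_neighborFinset]
        rcases (hPmem _ _).1 hy with ⟨-, h1⟩ | h1
        · rcases (hCmem x).1 h1 with rfl | rfl | h2
          · exact Or.inl rfl
          · exact Or.inr hij
          · exact Or.inr h2.1
        · exact Or.inr ((huij x).1 (hM.1 _ h1).1).1
    · rw [sum_eq_zero]
      · exact hmnn i hdi x
      · intro y _
        rw [hκ]
        simp only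
        rw [if_neg]
        exact fun h' => h ⟨y, h'⟩
  have hcol : ∀ y, ∑ x, κ x y ≤ mLazy G j y := by
    intro y
    by_cases h : ∃ x, (x, y) ∈ P
    · obtain ⟨x, hx⟩ := h
      rw [hcol1 _ _ hx, mLazy_eq G hdj, if_pos]
      · exact hb.le
      · rw [mem_insert, SimpleGraph.mem_neighborFinset]
        rcases (hPmem _ _).1 hx with ⟨h0, h1⟩ | h1
        · subst h0
          rcases (hCmem x).1 h1 with rfl | rfl | h2
          · exact Or.inr hij.symm
          · exact Or.inl rfl
          · exact Or.inr h2.2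
        · exact Or.inr ((huji y).1 (hM.1 _ h1).2.1).1
    · rw [sum_eq_zero]
      · exact hmnn j hdj y
      · intro x _
        rw [hκ]
        simp only
        rw [if_neg]
        exact fun h' => h ⟨x, h'⟩
  obtain ⟨f, hf⟩ : ∃ f : V → ℝ, f = fun x =>
      3 - (if x ∈ C then 1 else 0) - (if x = j then 1 else 0) := ⟨_, rfl⟩
  have hjC : j ∈ C := (hCmem j).2 (Or.inr (Or.inl rfl))
  have hdist : ∀ x y, 0 < mLazy G i x → mLazy G j y - ∑ z, κ z y ≠ 0 →
      (G.dist x y : ℝ) ≤ f x := by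
    intro x y hx hy
    have hx' : x = i ∨ G.Adj i x := by
      by_contra h
      rw [mLazy_eq G hdi, if_neg] at hx
      · exact lt_irrefl _ hx
      · simpa using h
    have hyC : y ∉ C := by
      intro h
      apply hy
      rw [hcol1 y y ((hPmem _ _).2 (Or.inl ⟨rfl, h⟩)), mLazy_eq G hdj, if_pos, hb, sub_self]
      rw [mem_insert, SimpleGraph.mem_neighborFinset]
      rcases (hCmem y).1 h with rfl | rfl | h2
      · exact Or.inr hij.symm
      · exact Or.inl rfl
      · exact Or.inr h2.2
    have hy' : G.Adj j y := by
      by_contra h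
      apply hy
      have h0 : mLazy G j y = 0 := by
        rw [mLazy_eq G hdj, if_neg]
        rw [mem_insert, SimpleGraph.mem_neighborFinset]
        rintro (rfl | h')
        · exact hyC hjC
        · exact h h'
      have h1 := hcol y
      have h2 : 0 ≤ ∑ z, κ z y := sum_nonneg fun z _ => hκ0 z y
      linarith
    have hjy : G.dist j y = 1 := SimpleGraph.dist_eq_one_iff_adj.2 hy'
    have hij1 : G.dist i j = 1 := SimpleGraph.dist_eq_one_iff_adj.2 hij
    have ht : G.dist x y ≤ G.dist x j + G.dist j y := hG.dist_triangle
    rw [hf]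
    simp only
    by_cases h1 : x = j
    · subst h1
      rw [if_pos hjC, if_pos rfl, hjy]; norm_num
    · by_cases h2 : x ∈ C
      · have h3 : G.Adj x j := by
          rcases (hCmem x).1 h2 with rfl | rfl | h3
          · exact hij
          · exact absurd rfl h1
          · exact h3.2.symm
        have h4 : G.dist x j = 1 := SimpleGraph.dist_eq_one_iff_adj.2 h3
        rw [if_pos h2, if_neg h1]
        have : G.dist x y ≤ 2 := by omega
        have : (G.dist x y : ℝ) ≤ 2 := by exact_mod_cast this
        linarith
      · have h5 : G.Adj i x := by
          rcases hx' with rfl | h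
          · exact absurd ((hCmem x).2 (Or.inl rfl)) h2
          · exact h
        have h4 : G.dist x i = 1 := SimpleGraph.dist_eq_one_iff_adj.2 h5.symm
        have ht2 : G.dist x j ≤ G.dist x i + G.dist i j := hG.dist_triangle
        rw [if_neg h2, if_neg h1]
        have : G.dist x y ≤ 3 := by omega
        have : (G.dist x y : ℝ) ≤ 3 := by exact_mod_cast this
        linarith
  have hmain := W1_le_partial G f hκ0 hrow hcol (sum_mLazy_one G hdi) (sum_mLazy_one G hdj) hdist
  -- sums against κ
  have hsumκ : ∀ g : V → V → ℝ, ∑ x, ∑ y, g x y * κ x y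
      = b * (∑ x ∈ C, g x x + ∑ p ∈ M, g p.1 p.2) := by
    intro g
    have hd : Disjoint (C.image (fun x => (x, x))) M := by
      rw [disjoint_left]
      intro p hp hpM
      obtain ⟨z, hz, rfl⟩ := mem_image.1 hp
      exact hMC1 _ _ hpM hz
    have h1 : ∑ x ∈ C, g x x = ∑ p ∈ C.image (fun x => (x, x)), g p.1 p.2 := by
      rw [sum_image]
      intro x _ y _ h
      exact (Prod.mk.inj h).1
    rw [h1, ← sum_union hd, ← hP, hκ, ← Fintype.sum_prod_type' (fun x y => g x y * (if (x, y) ∈ P then b else 0))]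
    simp only [mul_ite, mul_zero, Prod.mk.eta]
    rw [sum_ite_mem, univ_inter, mul_sum]
    exact sum_congr rfl fun _ _ => mul_comm _ _
  have hcost : ∑ x, ∑ y, (G.dist x y : ℝ) * κ x y = b * M.card := by
    rw [hsumκ]
    have h1 : ∑ x ∈ C, (G.dist x x : ℝ) = 0 := sum_eq_zero fun x _ => by simp
    have h2 : ∑ p ∈ M, (G.dist p.1 p.2 : ℝ) = ∑ p ∈ M, (1 : ℝ) := sum_congr rfl fun p hp => by
      rw [SimpleGraph.dist_eq_one_iff_adj.2 (hM.1 p hp).2.2]; norm_num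
    rw [h1, h2]; simp
  have hCcard : (C.card : ℝ) = tri G i j + 2 := by
    rw [hC, card_comm G hij]; push_cast; ring
  have hfC : ∑ x ∈ C, f x = 2 * tri G i j + 3 := by
    rw [hf]
    simp only [sum_sub_distrib, sum_const, sum_ite_mem, inter_self, sum_ite_eq', hjC, if_true,
      nsmul_eq_mul, hCcard]
    ring
  have hfM : ∑ p ∈ M, f p.1 = 3 * M.card := by
    have : ∑ p ∈ M, f p.1 = ∑ p ∈ M, (3 : ℝ) := sum_congr rfl fun p hp => by
      have h1 := hMC1 p.1 p.2 hp
      have h2 : p.1 ≠ j := fun h => h1 (h ▸ hjC)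
      rw [hf]
      simp [h1, h2]
    rw [this]; simp [mul_comm]
  have hfκ : ∑ x, (∑ y, κ x y) * f x = b * (2 * tri G i j + 3 + 3 * M.card) := by
    rw [← hfC, ← hfM, ← hsumκ (fun x _ => f x)]
    refine sum_congr rfl fun x _ => ?_
    rw [sum_mul]
    exact sum_congr rfl fun _ _ => mul_comm _ _
  have hfμ : ∑ x, mLazy G i x * f x
      = ((G.degree i : ℝ) + 1)⁻¹ * (3 * (G.degree i + 1) - (tri G i j + 2) - 1) := by
    rw [sum_mLazy G hdi]
    congr 1
    have hsub : insert i (G.neighborFinset i) ∩ C = C := by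
      apply inter_eq_right.2
      intro x hx
      rw [mem_insert, SimpleGraph.mem_neighborFinset]
      rcases (hCmem x).1 hx with rfl | rfl | h2
      · exact Or.inl rfl
      · exact Or.inr hij
      · exact Or.inr h2.1
    have hjB : j ∈ insert i (G.neighborFinset i) := by simp [hij]
    rw [hf]
    simp only [sum_sub_distrib]
    rw [sum_const, sum_ite_mem, hsub, sum_ite_eq', if_pos hjB, card_ball, sum_const, nsmul_eq_mul,
      nsmul_eq_mul, hCcard]
    push_cast
    ring
  simp only [sub_mul, sum_sub_distrib] at hmain
  rw [hcost, hfκ, hfμ] at hmain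
  refine hmain.trans (le_of_eq ?_)
  rw [hb]
  field_simp
  ring

lemma arith (a b t m : ℝ) (ha : 1 ≤ a) (hab : a ≤ b) (ht : 0 ≤ t) (hta : t + 1 ≤ a) (hm : 0 ≤ m)
    (c : ℝ) (hc : c = (b + 1)⁻¹ ∨ c = (a + 1)⁻¹) :
    (1 - c) * (-(pos (1 - 1 / a - 1 / b - t / b - m / b))
      - pos (1 - 1 / a - 1 / b - t / a - m / b) + t / b) - ((a + 1)⁻¹ - (b + 1)⁻¹)
    ≤ 1 - (3 - (t + 3) / (a + 1) - (2 * m + 2 * t + 3) / (b + 1)) := by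
  have ha0 : 0 < a := by linarith
  have hb0 : 0 < b := by linarith
  have hc1 : 0 ≤ 1 - c := by
    rcases hc with rfl | rfl
    · exact sub_nonneg.2 (inv_le_one_of_one_le₀ (by linarith))
    · exact sub_nonneg.2 (inv_le_one_of_one_le₀ (by linarith))
  have h1 : -(pos (1 - 1 / a - 1 / b - t / b - m / b))
      - pos (1 - 1 / a - 1 / b - t / a - m / b) + t / b ≤
      -(1 - 1 / a - 1 / b - t / b - m / b) - (1 - 1 / a - 1 / b - t / a - m / b) + t / b := by
    have e1 : 1 - 1 / a - 1 / b - t / b - m / b ≤ pos (1 - 1 / a - 1 / b - t / b - m / b) :=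
      le_max_left _ _
    have e2 : 1 - 1 / a - 1 / b - t / a - m / b ≤ pos (1 - 1 / a - 1 / b - t / a - m / b) :=
      le_max_left _ _
    linarith
  have h2 := mul_le_mul_of_nonneg_left h1 hc1
  suffices h : (1 - c) * (-(1 - 1 / a - 1 / b - t / b - m / b) - (1 - 1 / a - 1 / b - t / a - m / b)
      + t / b) - ((a + 1)⁻¹ - (b + 1)⁻¹)
      ≤ 1 - (3 - (t + 3) / (a + 1) - (2 * m + 2 * t + 3) / (b + 1)) by linarith
  rw [← sub_nonneg]
  rcases hc with rfl | rfl
  · have : 1 - (3 - (t + 3) / (a + 1) - (2 * m + 2 * t + 3) / (b + 1)) -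
        ((1 - (b + 1)⁻¹) * (-(1 - 1 / a - 1 / b - t / b - m / b)
          - (1 - 1 / a - 1 / b - t / a - m / b) + t / b) - ((a + 1)⁻¹ - (b + 1)⁻¹))
        = (b - a) * (2 * a - (2 + t)) / (a * (a + 1) * (b + 1)) := by
      field_simp
      ring
    rw [this]
    exact div_nonneg (mul_nonneg (by linarith) (by linarith)) (by positivity)
  · have : 1 - (3 - (t + 3) / (a + 1) - (2 * m + 2 * t + 3) / (b + 1)) -
        ((1 - (a + 1)⁻¹) * (-(1 - 1 / a - 1 / b - t / b - m / b)
          - (1 - 1 / a - 1 / b - t / a - m / b) + t / b) - ((a + 1)⁻¹ - (b + 1)⁻¹))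
        = (b - a) * (2 + 2 * t + 2 * m) / (b * (a + 1) * (b + 1)) := by
      field_simp
      ring
    rw [this]
    exact div_nonneg (mul_nonneg (by linarith) (by linarith)) (by positivity)

lemma exists_matching (i j : V) : ∃ M, IsCrossMatching G i j M ∧ M.card = matchNum G i j := by
  have h : matchNum G i j ∈ {n : ℕ | ∃ M : Finset (V × V), IsCrossMatching G i j M ∧ M.card = n} := by
    apply Nat.sSup_mem
    · exact ⟨0, ∅, ⟨by simp, by simp⟩, rfl⟩
    · refine ⟨Fintype.card (V × V), ?_⟩
      rintro n ⟨M, -, rfl⟩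
      exact card_le_univ M
  exact h

lemma swap_matching {i j : V} {M : Finset (V × V)} (h : IsCrossMatching G i j M) :
    IsCrossMatching G j i (M.image Prod.swap) ∧ (M.image Prod.swap).card = M.card := by
  refine ⟨⟨?_, ?_⟩, card_image_of_injective _ Prod.swap_injective⟩
  · intro p hp
    obtain ⟨q, hq, rfl⟩ := mem_image.1 hp
    exact ⟨(h.1 q hq).2.1, (h.1 q hq).1, (h.1 q hq).2.2.symm⟩
  · intro p hp p' hp' hne
    obtain ⟨q, hq, rfl⟩ := mem_image.1 hp
    obtain ⟨q', hq', rfl⟩ := mem_image.1 hp'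
    have := h.2 q hq q' hq' (fun e => hne (by rw [e]))
    exact ⟨this.2, this.1⟩

lemma tri_symm (i j : V) : tri G i j = tri G j i := by
  unfold tri; rw [inter_comm]

lemma tri_lt {i j : V} (hij : G.Adj i j) : tri G i j + 1 ≤ G.degree i := by
  unfold tri
  rw [← SimpleGraph.card_neighborFinset_eq_degree]
  apply card_lt_card
  refine ⟨inter_subset_left, fun h => ?_⟩
  have := h ((G.mem_neighborFinset i j).2 hij)
  simp at this

/-- lazy extension of the quadrangle-augmented Jost–Liu bound. -/
theorem stmt11 (hG : G.Connected) (i j : V) (hij : G.Adj i j) :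
    cOR G i j ≥
      (1 - alphaStar G i j) *
        (-(pos (frakK G i j - Zmax G i j - SS G i j))
          - pos (frakK G i j - Zmin G i j - SS G i j) + Zmax G i j)
      - DeltaL G i j := by
  obtain ⟨M, hM, hMc⟩ := exists_matching G i j
  have hal : alphaStar G i j = min (alphaL G i) (alphaL G j) ∨
      alphaStar G i j = max (alphaL G i) (alphaL G j) := by
    unfold alphaStar
    split_ifs
    · exact Or.inl rfl
    · exact Or.inr rfl
  have h1i := tri_lt G hij
  have h1j := tri_lt G hij.symm
  rw [← tri_symm G i j] at h1j
  have r1i : (tri G i j : ℝ) + 1 ≤ G.degree i := by exact_mod_cast h1i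
  have r1j : (tri G i j : ℝ) + 1 ≤ G.degree j := by exact_mod_cast h1j
  have ht : (0 : ℝ) ≤ tri G i j := Nat.cast_nonneg _
  have hm : (0 : ℝ) ≤ matchNum G i j := Nat.cast_nonneg _
  unfold frakK Zmax Zmin SS DeltaL cOR rhoMin rhoMax
  rcases le_total (G.degree i) (G.degree j) with h | h
  · have hr : (G.degree i : ℝ) ≤ G.degree j := by exact_mod_cast h
    have hα : alphaL G j ≤ alphaL G i := by
      unfold alphaL
      exact inv_anti₀ (by positivity) (by linarith)
    have hk := key G hG hij h hM
    rw [hMc] at hk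
    rw [min_eq_right hα, max_eq_left hα] at *
    rw [min_eq_left h, max_eq_right h]
    have := arith (G.degree i) (G.degree j) (tri G i j) (matchNum G i j) (by linarith) hr ht r1i hm
      (alphaStar G i j) hal
    unfold alphaL
    linarith
  · have hr : (G.degree j : ℝ) ≤ G.degree i := by exact_mod_cast h
    have hα : alphaL G i ≤ alphaL G j := by
      unfold alphaL
      exact inv_anti₀ (by positivity) (by linarith)
    have hk := key G hG hij.symm h (swap_matching G hM).1
    rw [(swap_matching G hM).2, hMc, W1_symm, ← tri_symm G i j] at hk
    rw [min_eq_left hα, max_eq_right hα] at *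
    rw [min_eq_right h, max_eq_left h]
    have := arith (G.degree j) (G.degree i) (tri G i j) (matchNum G i j) (by linarith) hr ht r1j hm
      (alphaStar G i j) hal
    unfold alphaL
    linarith

end

end Curv
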